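/- arXiv:math/0605767 — 3 statements merged into one kernel-verified Lean document; each statement's English description precedes it below -/
import Mathlib

section
/- Let x and y be nonzero vectors in ℝⁿ such that ∠(x,y) < π/2, and set α = ∠(x,y). Then there exists an n×n real symmetric positive definite matrix C such that Cx = y and (κ(C) − 1)/(κ(C) + 1) = sin α, i.e., κ(C) = (1 + sin α)/(1 − sin α). -/
open Matrix

/-- The Euclidean norm of a vector in `ℝⁿ`. -/
noncomputable def vnorm {n : ℕ} (x : Fin n → ℝ) : ℝ := Real.sqrt (x ⬝ᵥ x)

/-- The angle `∠(x,y) = arccos(⟨x,y⟩/(‖x‖‖y‖)) ∈ [0,π]` between vectors in `ℝⁿ`. -/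
noncomputable def vangle {n : ℕ} (x y : Fin n → ℝ) : ℝ :=
  Real.arccos ((x ⬝ᵥ y) / (vnorm x * vnorm y))

/-- The spectral condition number `κ(C) = λmax(C)/λmin(C)` of a symmetric matrix. -/
noncomputable def condNum {n : ℕ} {C : Matrix (Fin n) (Fin n) ℝ} (hC : C.IsHermitian) : ℝ :=
  (⨆ i, hC.eigenvalues i) / (⨅ i, hC.eigenvalues i)

/-!
A symmetric `C` with `C x = y` and no eigenvalues other than `a` and `b` satisfies
`(y - b x) ⬝ (y - a x) = 0`: these two vectors are its eigencomponents of `x`, up to scale. By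
Thales' theorem this says that `y` lies on the sphere with diameter `[a x, b x]`, and conversely
each such `y` is reached by scaling by `a` along `y - b x` and by `b` orthogonally to it. Seen from
the origin, the sphere subtends a cone of half-angle `arcsin ((b - a) / (b + a))` about `x`.
Choosing `a = m (1 - sin α)` and `b = m (1 + sin α)` makes this half-angle `α`, and
`m = ‖y‖ / (‖x‖ cos α)` makes `y` the point of tangency.
-/

section AxialScaling

variable {ι K : Type*} [Fintype ι] [DecidableEq ι] [Field K] {u v x y : ι → K} {a b μ : K}

lemma mem_spectrum_iff_exists_mulVec_eq_smul {A : Matrix ι ι K} :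
    μ ∈ spectrum K A ↔ ∃ u ≠ 0, A *ᵥ u = μ • u := by
  rw [← spectrum_toLin', ← Module.End.hasEigenvalue_iff_mem_spectrum,
    Module.End.hasEigenvalue_iff, Submodule.ne_bot_iff]
  simp only [Module.End.mem_eigenspace_iff, toLin'_apply]
  exact exists_congr fun _ => and_comm

/-- The symmetric matrix that scales by `a` along `v` and by `b` on the orthogonal complement
of `v`; it is `b • 1` when `v = 0`. -/
def axialScaling (v : ι → K) (a b : K) : Matrix ι ι K :=
  b • 1 - ((b - a) / (v ⬝ᵥ v)) • vecMulVec v v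

lemma isSymm_axialScaling (v : ι → K) (a b : K) : (axialScaling v a b).IsSymm := by
  simp only [IsSymm, axialScaling, transpose_sub, transpose_smul, transpose_one,
    transpose_vecMulVec]

lemma axialScaling_mulVec (v : ι → K) (a b : K) (u : ι → K) :
    axialScaling v a b *ᵥ u = b • u - ((b - a) / (v ⬝ᵥ v) * (v ⬝ᵥ u)) • v := by
  simp only [axialScaling, sub_mulVec, smul_mulVec, one_mulVec, vecMulVec_mulVec,
    op_smul_eq_smul, smul_smul]

lemma axialScaling_mulVec_of_dotProduct_eq_zero (a b : K) (h : v ⬝ᵥ u = 0) :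
    axialScaling v a b *ᵥ u = b • u := by
  rw [axialScaling_mulVec, h, mul_zero, zero_smul, sub_zero]

variable [LinearOrder K] [IsStrictOrderedRing K]

lemma axialScaling_mulVec_self (v : ι → K) (a b : K) : axialScaling v a b *ᵥ v = a • v := by
  rcases eq_or_ne v 0 with rfl | hv
  · rw [mulVec_zero, smul_zero]
  · have hvv : v ⬝ᵥ v ≠ 0 := mt dotProduct_self_eq_zero.mp hv
    rw [axialScaling_mulVec, div_mul_cancel₀ _ hvv, ← sub_smul, sub_sub_cancel]

lemma axialScaling_mulVec_of_thales (h : (y - b • x) ⬝ᵥ (y - a • x) = 0) :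
    axialScaling (y - b • x) a b *ᵥ x = y := by
  set v := y - b • x with hv
  have hvx : (b - a) * (v ⬝ᵥ x) = -(v ⬝ᵥ v) := by
    have hdiff : y - a • x = v + (b - a) • x := by rw [hv]; module
    rw [hdiff, dotProduct_add, dotProduct_smul, smul_eq_mul] at h
    linear_combination h
  have hproj : (v ⬝ᵥ v / (v ⬝ᵥ v)) • v = v := by
    rcases eq_or_ne v 0 with hv₀ | hv₀
    · rw [hv₀, smul_zero]
    · rw [div_self (mt dotProduct_self_eq_zero.mp hv₀), one_smul]
  rw [axialScaling_mulVec, div_mul_eq_mul_div, hvx, neg_div, neg_smul, hproj, hv]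
  module

lemma spectrum_axialScaling_subset (v : ι → K) (a b : K) :
    spectrum K (axialScaling v a b) ⊆ {a, b} := by
  intro μ hμ
  obtain ⟨u, hu, hμu⟩ := mem_spectrum_iff_exists_mulVec_eq_smul.mp hμ
  by_cases hvu : v ⬝ᵥ u = 0
  · right
    rw [axialScaling_mulVec_of_dotProduct_eq_zero a b hvu] at hμu
    exact (smul_left_injective K hu hμu).symm
  · left
    have hsymm : v ⬝ᵥ axialScaling v a b *ᵥ u = axialScaling v a b *ᵥ v ⬝ᵥ u := by
      rw [dotProduct_mulVec, ← mulVec_transpose, isSymm_axialScaling]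
    rw [hμu, axialScaling_mulVec_self, dotProduct_smul, smul_dotProduct] at hsymm
    exact smul_left_injective K hvu hsymm

lemma isLeast_spectrum_axialScaling (hab : a ≤ b) (hu : u ≠ 0)
    (hau : axialScaling v a b *ᵥ u = a • u) : IsLeast (spectrum K (axialScaling v a b)) a := by
  refine ⟨mem_spectrum_iff_exists_mulVec_eq_smul.mpr ⟨u, hu, hau⟩, fun μ hμ => ?_⟩
  rcases spectrum_axialScaling_subset v a b hμ with rfl | rfl
  exacts [le_rfl, hab]

lemma isGreatest_spectrum_axialScaling (hab : a ≤ b) (hu : u ≠ 0)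
    (hbu : axialScaling v a b *ᵥ u = b • u) :
    IsGreatest (spectrum K (axialScaling v a b)) b := by
  refine ⟨mem_spectrum_iff_exists_mulVec_eq_smul.mpr ⟨u, hu, hbu⟩, fun μ hμ => ?_⟩
  rcases spectrum_axialScaling_subset v a b hμ with rfl | rfl
  exacts [hab, le_rfl]

end AxialScaling

section ConditionNumber

open scoped ComplexOrder in
lemma posDef_of_isLeast_spectrum {ι 𝕜 : Type*} [Fintype ι] [DecidableEq ι] [RCLike 𝕜]
    {C : Matrix ι ι 𝕜} {a : ℝ} (hC : C.IsHermitian) (ha : IsLeast (spectrum ℝ C) a)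
    (ha₀ : 0 < a) : C.PosDef :=
  hC.posDef_iff_eigenvalues_pos.mpr fun i =>
    ha₀.trans_le (ha.2 (hC.eigenvalues_mem_spectrum_real i))

variable {n : ℕ} {x y : Fin n → ℝ} {a b : ℝ}

lemma condNum_eq_div {C : Matrix (Fin n) (Fin n) ℝ} (hC : C.IsHermitian)
    (ha : IsLeast (spectrum ℝ C) a) (hb : IsGreatest (spectrum ℝ C) b) :
    condNum hC = b / a := by
  rw [hC.spectrum_real_eq_range_eigenvalues] at ha hb
  rw [condNum, iSup, iInf, hb.csSup_eq, ha.csInf_eq]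

lemma exists_posDef_condNum_eq_div_of_thales (hx : x ≠ 0) (ha : 0 < a) (hab : a ≤ b)
    (h : (y - b • x) ⬝ᵥ (y - a • x) = 0) (hya : y = a • x → a = b) (hyb : y = b • x → a = b) :
    ∃ (C : Matrix (Fin n) (Fin n) ℝ) (hC : C.PosDef),
      C *ᵥ x = y ∧ condNum hC.isHermitian = b / a := by
  set C := axialScaling (y - b • x) a b
  have hCx : C *ᵥ x = y := axialScaling_mulVec_of_thales h
  have hleast : IsLeast (spectrum ℝ C) a := by
    by_cases hy : y = b • x
    · exact isLeast_spectrum_axialScaling hab hx (hCx.trans (hy.trans (by rw [hyb hy])))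
    · exact isLeast_spectrum_axialScaling hab (sub_ne_zero.mpr hy) (axialScaling_mulVec_self _ a b)
  have hgreatest : IsGreatest (spectrum ℝ C) b := by
    by_cases hy : y = a • x
    · exact isGreatest_spectrum_axialScaling hab hx (hCx.trans (hy.trans (by rw [hya hy])))
    · exact isGreatest_spectrum_axialScaling hab (sub_ne_zero.mpr hy)
        (axialScaling_mulVec_of_dotProduct_eq_zero a b h)
  have hC : C.PosDef :=
    posDef_of_isLeast_spectrum (isHermitian_iff_isSymm.mpr (isSymm_axialScaling _ a b)) hleast ha
  exact ⟨C, hC, hCx, condNum_eq_div hC.isHermitian hleast hgreatest⟩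

end ConditionNumber

section Angle

variable {n : ℕ} {x y : Fin n → ℝ}

lemma vnorm_eq_norm (x : Fin n → ℝ) : vnorm x = ‖WithLp.toLp 2 x‖ := by
  rw [vnorm, norm_eq_sqrt_real_inner, EuclideanSpace.inner_toLp_toLp, star_trivial]

lemma vangle_eq_angle (x y : Fin n → ℝ) :
    vangle x y = InnerProductGeometry.angle (WithLp.toLp 2 x) (WithLp.toLp 2 y) := by
  rw [vangle, InnerProductGeometry.angle, vnorm_eq_norm, vnorm_eq_norm,
    EuclideanSpace.inner_toLp_toLp, star_trivial, dotProduct_comm]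

lemma vnorm_pos (hx : x ≠ 0) : 0 < vnorm x := by
  rwa [vnorm_eq_norm, norm_pos_iff, ne_eq, WithLp.toLp_eq_zero]

lemma vnorm_sq (x : Fin n → ℝ) : vnorm x ^ 2 = x ⬝ᵥ x :=
  Real.sq_sqrt (dotProduct_self_star_nonneg x)

lemma cos_vangle_mul_vnorm_mul_vnorm (x y : Fin n → ℝ) :
    Real.cos (vangle x y) * (vnorm x * vnorm y) = x ⬝ᵥ y := by
  rw [vangle_eq_angle, vnorm_eq_norm, vnorm_eq_norm,
    InnerProductGeometry.cos_angle_mul_norm_mul_norm, EuclideanSpace.inner_toLp_toLp,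
    star_trivial, dotProduct_comm]

lemma vangle_smul_self_of_pos {r : ℝ} (hx : x ≠ 0) (hr : 0 < r) : vangle x (r • x) = 0 := by
  rw [vangle_eq_angle, WithLp.toLp_smul, InnerProductGeometry.angle_smul_right_of_pos _ _ hr,
    InnerProductGeometry.angle_self (mt (WithLp.toLp_eq_zero 2).mp hx)]

lemma thales_of_tangent {m : ℝ} (hm : m * (vnorm x * Real.cos (vangle x y)) = vnorm y) :
    (y - (m * (1 + Real.sin (vangle x y))) • x) ⬝ᵥ
      (y - (m * (1 - Real.sin (vangle x y))) • x) = 0 := by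
  simp only [sub_dotProduct, dotProduct_sub, smul_dotProduct, dotProduct_smul, smul_eq_mul,
    dotProduct_comm y x, ← vnorm_sq, ← cos_vangle_mul_vnorm_mul_vnorm x y]
  rw [← hm]
  linear_combination m ^ 2 * vnorm x ^ 2 * (-Real.sin_sq_add_cos_sq (vangle x y))

end Angle

/-- If `x, y` are nonzero vectors in `ℝⁿ` with `∠(x,y) < π/2`, then there
exists a real symmetric positive definite matrix `C` with `Cx = y` and
`(κ(C) − 1)/(κ(C) + 1) = sin ∠(x,y)`, i.e. `κ(C) = (1 + sin ∠(x,y))/(1 − sin ∠(x,y))`. -/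
theorem exists_posDef_of_acute_angle {n : ℕ} (x y : Fin n → ℝ) (hx : x ≠ 0) (hy : y ≠ 0)
    (hangle : vangle x y < Real.pi / 2) :
    ∃ (C : Matrix (Fin n) (Fin n) ℝ) (hC : C.PosDef),
      C *ᵥ x = y ∧
      (condNum hC.isHermitian - 1) / (condNum hC.isHermitian + 1) = Real.sin (vangle x y) ∧
      condNum hC.isHermitian =
        (1 + Real.sin (vangle x y)) / (1 - Real.sin (vangle x y)) := by
  set α := vangle x y
  set m := vnorm y / (vnorm x * Real.cos α)
  have hα : 0 ≤ α := Real.arccos_nonneg _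
  have hcos : 0 < Real.cos α := Real.cos_pos_of_mem_Ioo ⟨by linarith [Real.pi_pos], hangle⟩
  have hsin : 0 ≤ Real.sin α := Real.sin_nonneg_of_nonneg_of_le_pi hα (Real.arccos_le_pi _)
  have hsin' : Real.sin α < 1 := by nlinarith [Real.sin_sq_add_cos_sq α]
  have hden : 0 < vnorm x * Real.cos α := mul_pos (vnorm_pos hx) hcos
  have hm₀ : 0 < m := div_pos (vnorm_pos hy) hden
  have ha : 0 < m * (1 - Real.sin α) := mul_pos hm₀ (by linarith)
  have hab : m * (1 - Real.sin α) ≤ m * (1 + Real.sin α) := by gcongr; linarith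
  have hcollinear {r : ℝ} (hr : 0 < r) (hyr : y = r • x) :
      m * (1 - Real.sin α) = m * (1 + Real.sin α) := by
    have hα₀ : α = 0 := by simpa only [← hyr] using vangle_smul_self_of_pos hx hr
    rw [hα₀, Real.sin_zero, sub_zero, add_zero]
  obtain ⟨C, hC, hCx, hκ⟩ := exists_posDef_condNum_eq_div_of_thales hx ha hab
    (thales_of_tangent (div_mul_cancel₀ _ hden.ne')) (hcollinear ha) (hcollinear (ha.trans_le hab))
  rw [mul_div_mul_left _ _ hm₀.ne'] at hκ
  refine ⟨C, hC, hCx, ?_, hκ⟩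
  have hsub : 1 - Real.sin α ≠ 0 := by linarith
  rw [hκ]
  field_simp
  ring
end

section
/- In the preconditioned method with variable preconditioning, suppose x_l ≠ x* for all l ≤ k. Then the A-norm of the error e_{k+1} is bounded above by the A-norm of the error of one step of the preconditioned steepest descent method starting from x_k with preconditioner B_k: ‖e_{k+1}‖_A ≤ ‖e_k − α s_k‖_A for every real number α. -/
open Matrix

/-- The `A`-norm `‖x‖_A = √⟨A x, x⟩`. -/
noncomputable def anorm {n : ℕ} (A : Matrix (Fin n) (Fin n) ℝ) (x : Fin n → ℝ) : ℝ :=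
  Real.sqrt ((A *ᵥ x) ⬝ᵥ x)

/-!
All orthogonality is with respect to the `A`-inner product. Each direction `p k` is orthogonal to
the `p l` with `l` in the window `[k - m k, k)`, because the left ends of the windows never move
back; the line searches then make `e (k + 1)` orthogonal to `p k` and to every direction subtracted
from `s k` in forming it, hence to `s k` itself. Since `e k - α • s k` differs from `e (k + 1)` by a
combination of `p k` and `s k`, the bound is Pythagoras' theorem.
-/

section PosSemidefForm

-- In the paper's notation `f` is the `A`-inner product and `w k = k - m k`; the line search is
-- written for the errors, `⟨r, p⟩` being `f e p`.
variable {K V : Type*} [Field K] [LinearOrder K] [IsStrictOrderedRing K] [AddCommGroup V]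
  [Module K V] {f : V →ₗ[K] V →ₗ[K] K} {w : ℕ → ℕ} {s p e : ℕ → V}

-- Cauchy–Schwarz makes the numerator vanish whenever the denominator does.
lemma form_div_self_mul_self (hf : f.IsPosSemidef) (u v : V) : f u v / f v v * f v v = f u v := by
  refine div_mul_cancel_of_imp fun hv => ?_
  have hv_ker : f v = 0 :=
    (LinearMap.BilinForm.apply_apply_same_eq_zero_iff f hf.nonneg hf.isSymm).1 hv
  rw [hf.isSymm.eq_iff, hv_ker, LinearMap.zero_apply]

lemma form_sub_proj_eq_zero (hf : f.IsPosSemidef) (u v : V) :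
    f (u - (f u v / f v v) • v) v = 0 := by
  rw [map_sub, map_smul, LinearMap.sub_apply, LinearMap.smul_apply, smul_eq_mul,
    form_div_self_mul_self hf, sub_self]

lemma form_sub_sum_proj_eq_zero {ι : Type*} (hf : f.IsPosSemidef) {S : Finset ι} {q : ι → V}
    {i : ι} (hi : i ∈ S) (hq : ∀ l ∈ S, l ≠ i → f (q l) (q i) = 0) (u : V) :
    f (u - ∑ l ∈ S, (f u (q l) / f (q l) (q l)) • q l) (q i) = 0 := by
  have hsum : f (∑ l ∈ S, (f u (q l) / f (q l) (q l)) • q l) (q i) = f u (q i) := by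
    simp only [map_sum, map_smul, LinearMap.sum_apply, LinearMap.smul_apply, smul_eq_mul]
    rw [Finset.sum_eq_single_of_mem i hi fun l hl hli => by rw [hq l hl hli, mul_zero],
      form_div_self_mul_self hf]
  rw [map_sub, LinearMap.sub_apply, hsum, sub_self]

lemma form_self_le_form_add_self (hf : f.IsPosSemidef) {u v : V} (huv : f u v = 0) :
    f u u ≤ f (u + v) (u + v) := by
  have hvu : f v u = 0 := hf.isSymm.eq_iff.1 huv
  calc f u u ≤ f u u + f v v := le_add_of_nonneg_right (hf.nonneg v)
    _ = f (u + v) (u + v) := by simp [huv, hvu]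

lemma form_direction_eq_zero_of_mem_window (hf : f.IsPosSemidef) (hw : Monotone w)
    (hp : ∀ k, p k = s k - ∑ l ∈ Finset.Ico (w k) k, (f (s k) (p l) / f (p l) (p l)) • p l)
    {i j : ℕ} (hi : i ∈ Finset.Ico (w j) j) : f (p j) (p i) = 0 := by
  induction j using Nat.strong_induction_on generalizing i with
  | _ j ih =>
    rw [hp j]
    refine form_sub_sum_proj_eq_zero hf hi (fun l hl hli => ?_) (s j)
    rw [Finset.mem_Ico] at hi hl
    obtain hlt | hgt := hli.lt_or_gt
    · exact hf.isSymm.eq_iff.1 (ih i hi.2 (Finset.mem_Ico.2 ⟨(hw hi.2.le).trans hl.1, hlt⟩))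
    · exact ih l hl.2 (Finset.mem_Ico.2 ⟨(hw hl.2.le).trans hi.1, hgt⟩)

lemma form_error_succ_direction_eq_zero (hf : f.IsPosSemidef) (hw : Monotone w)
    (hp : ∀ k, p k = s k - ∑ l ∈ Finset.Ico (w k) k, (f (s k) (p l) / f (p l) (p l)) • p l)
    (he : ∀ k, e (k + 1) = e k - (f (e k) (p k) / f (p k) (p k)) • p k)
    {i k : ℕ} (hwi : w k ≤ i) (hik : i ≤ k) : f (e (k + 1)) (p i) = 0 := by
  induction k, hik using Nat.le_induction with
  | base => rw [he, form_sub_proj_eq_zero hf]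
  | succ k hik ih =>
    have h_error : f (e (k + 1)) (p i) = 0 := ih ((hw k.le_succ).trans hwi)
    have h_direction : f (p (k + 1)) (p i) = 0 := form_direction_eq_zero_of_mem_window hf hw hp
      (Finset.mem_Ico.2 ⟨hwi, Nat.lt_succ_of_le hik⟩)
    rw [he (k + 1), map_sub, map_smul, LinearMap.sub_apply, LinearMap.smul_apply, h_error,
      h_direction, smul_zero, sub_zero]

lemma form_error_succ_search_eq_zero (hf : f.IsPosSemidef) (hw : Monotone w)
    (hp : ∀ k, p k = s k - ∑ l ∈ Finset.Ico (w k) k, (f (s k) (p l) / f (p l) (p l)) • p l)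
    (he : ∀ k, e (k + 1) = e k - (f (e k) (p k) / f (p k) (p k)) • p k) (k : ℕ) :
    f (e (k + 1)) (s k) = 0 := by
  have h_direction : f (e (k + 1)) (p k) = 0 := by rw [he, form_sub_proj_eq_zero hf]
  have h_window : f (e (k + 1))
      (∑ l ∈ Finset.Ico (w k) k, (f (s k) (p l) / f (p l) (p l)) • p l) = 0 := by
    rw [map_sum]
    refine Finset.sum_eq_zero fun l hl => ?_
    rw [Finset.mem_Ico] at hl
    rw [map_smul, form_error_succ_direction_eq_zero hf hw hp he hl.1 hl.2.le, smul_zero]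
  rw [← sub_add_cancel (s k) (∑ l ∈ Finset.Ico (w k) k, (f (s k) (p l) / f (p l) (p l)) • p l),
    ← hp k, map_add, h_direction, h_window, add_zero]

theorem pcg_le_psd_step_general (hf : f.IsPosSemidef) (hw : Monotone w)
    (hp : ∀ k, p k = s k - ∑ l ∈ Finset.Ico (w k) k, (f (s k) (p l) / f (p l) (p l)) • p l)
    (he : ∀ k, e (k + 1) = e k - (f (e k) (p k) / f (p k) (p k)) • p k) (k : ℕ) (α : K) :
    f (e (k + 1)) (e (k + 1)) ≤ f (e k - α • s k) (e k - α • s k) := by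
  set c := f (e k) (p k) / f (p k) (p k)
  have h_psd_error : e k - α • s k = e (k + 1) + (c • p k - α • s k) := by rw [he]; abel
  have h_direction : f (e (k + 1)) (p k) = 0 := by rw [he, form_sub_proj_eq_zero hf]
  have h_search : f (e (k + 1)) (s k) = 0 := form_error_succ_search_eq_zero hf hw hp he k
  rw [h_psd_error]
  refine form_self_le_form_add_self hf ?_
  rw [map_sub, map_smul, map_smul, h_direction, h_search, smul_zero, smul_zero, sub_zero]

end PosSemidefForm

lemma monotone_sub_of_succ_le {m : ℕ → ℕ} (hm : ∀ k, m (k + 1) ≤ m k + 1) :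
    Monotone fun k => k - m k :=
  monotone_nat_of_le_succ fun k => by have := hm k; omega

section Matrix

variable {ι R : Type*} [Fintype ι] [DecidableEq ι]

lemma mulVec_dotProduct_eq_toLinearMap₂' [CommRing R] {A : Matrix ι ι R} (hA : A.IsSymm)
    (u v : ι → R) : A *ᵥ u ⬝ᵥ v = toLinearMap₂' R A u v := by
  rw [toLinearMap₂'_apply', dotProduct_mulVec, ← mulVec_transpose, hA.eq]

lemma isPosSemidef_toLinearMap₂' [CommRing R] [PartialOrder R] [StarRing R] [TrivialStar R]
    {A : Matrix ι ι R} (hA : A.PosSemidef) :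
    LinearMap.IsPosSemidef (toLinearMap₂' R A : (ι → R) →ₗ[R] (ι → R) →ₗ[R] R) where
  eq u v := by
    rw [RingHom.id_apply, ← mulVec_dotProduct_eq_toLinearMap₂' (isHermitian_iff_isSymm.1 hA.1),
      dotProduct_comm, toLinearMap₂'_apply']
  nonneg u := by simpa [toLinearMap₂'_apply'] using hA.dotProduct_mulVec_nonneg u

lemma residual_eq_mulVec_error [CommRing R] {A : Matrix ι ι R} (hA : IsUnit A) (b x : ι → R) :
    b - A *ᵥ x = A *ᵥ (A⁻¹ *ᵥ b - x) := by
  rw [mulVec_sub, mulVec_mulVec, mul_nonsing_inv _ ((isUnit_iff_isUnit_det A).1 hA), one_mulVec]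

lemma error_succ_of_residual_step [Field R] {A : Matrix ι ι R} (hA : IsUnit A) {b : ι → R}
    {x r p e : ℕ → ι → R} {d : ℕ → R} (hr : ∀ k, r k = b - A *ᵥ x k)
    (hx : ∀ k, x (k + 1) = x k + (r k ⬝ᵥ p k / d k) • p k) (he : ∀ k, e k = A⁻¹ *ᵥ b - x k)
    (k : ℕ) : e (k + 1) = e k - (A *ᵥ e k ⬝ᵥ p k / d k) • p k := by
  have h_residual : r k = A *ᵥ e k := by rw [hr, he, residual_eq_mulVec_error hA]
  rw [he (k + 1), hx, h_residual, ← sub_sub, ← he]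

end Matrix

/-- In the preconditioned method with variable preconditioning, if
`x l ≠ x*` for all `l ≤ k`, then `‖e (k+1)‖_A` is bounded above by the `A`-norm of the error
of one step of the preconditioned steepest descent method from `x k` with preconditioner
`B k`: `‖e (k+1)‖_A ≤ ‖e k − α • s k‖_A` for every real `α`. -/
theorem pcg_le_psd_step
    {n : ℕ} (A : Matrix (Fin n) (Fin n) ℝ) (hA : A.PosDef)
    (b x0 : Fin n → ℝ)
    (B : ℕ → Matrix (Fin n) (Fin n) ℝ) (hB : ∀ k, (B k).PosDef)
    (m : ℕ → ℕ) (hm0 : m 0 = 0) (hmle : ∀ k, m k ≤ k) (hmsucc : ∀ k, m (k + 1) ≤ m k + 1)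
    (x r s p e : ℕ → Fin n → ℝ)
    (hx0 : x 0 = x0)
    (hr : ∀ k, r k = b - A *ᵥ x k)
    (hs : ∀ k, s k = (B k)⁻¹ *ᵥ r k)
    (hp : ∀ k, p k = s k - ∑ l ∈ Finset.Ico (k - m k) k,
        (((A *ᵥ s k) ⬝ᵥ p l) / ((A *ᵥ p l) ⬝ᵥ p l)) • p l)
    (hxs : ∀ k, x (k + 1) = x k + ((r k ⬝ᵥ p k) / ((A *ᵥ p k) ⬝ᵥ p k)) • p k)
    (he : ∀ k, e k = A⁻¹ *ᵥ b - x k)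
    (k : ℕ) (hexact : ∀ l ≤ k, x l ≠ A⁻¹ *ᵥ b) :
    ∀ α : ℝ, anorm A (e (k + 1)) ≤ anorm A (e k - α • s k) := by
  have h_error := error_succ_of_residual_step hA.isUnit hr hxs he
  simp only [anorm, mulVec_dotProduct_eq_toLinearMap₂' (isHermitian_iff_isSymm.1 hA.1)]
    at hp h_error ⊢
  exact fun α => Real.sqrt_le_sqrt (pcg_le_psd_step_general
    (isPosSemidef_toLinearMap₂' hA.posSemidef) (monotone_sub_of_succ_le hmsucc) hp h_error k α)
end

section
/- Let A and B be n×n real symmetric positive definite matrices, and let a and b be the smallest and largest values of the Rayleigh quotient ⟨A u, u⟩/⟨B u, u⟩ over nonzero u ∈ ℝⁿ (i.e., the extreme eigenvalues of B⁻¹A), normalized so that a + b = 2. Then for any κmax ≥ 1, the condition b/a ≤ κmax holds if and only if ‖I − B⁻¹A‖_B ≤ (κmax − 1)/(κmax + 1), where ‖·‖_B denotes the operator norm induced by the B-inner product ⟨x,y⟩_B = ⟨B x, y⟩. -/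
open Matrix

/-- The `B`-norm `‖x‖_B = √⟨B x, x⟩` for an SPD matrix `B`. -/
noncomputable def bnorm {n : ℕ} (B : Matrix (Fin n) (Fin n) ℝ) (x : Fin n → ℝ) : ℝ :=
  Real.sqrt ((B *ᵥ x) ⬝ᵥ x)

/-- The operator norm of a matrix `M` induced by the `B`-inner product:
`‖M‖_B = sup_{x ≠ 0} ‖M x‖_B / ‖x‖_B`. -/
noncomputable def bOpNorm {n : ℕ} (B M : Matrix (Fin n) (Fin n) ℝ) : ℝ :=
  sSup {t : ℝ | ∃ x : Fin n → ℝ, x ≠ 0 ∧ t = bnorm B (M *ᵥ x) / bnorm B x}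

/-!
The `B`-inner product turns `ℝⁿ` into an inner product space on which `B⁻¹A` is a symmetric operator
whose Rayleigh quotient is `⟨A u, u⟩/⟨B u, u⟩`. The norm of a symmetric operator is the supremum of
the modulus of its Rayleigh quotient, so `‖I − B⁻¹A‖_B = max (1 − a) (c − 1)`. Under the
normalization `a + c = 2` both entries equal `c − 1`, and `c/a = (1 + ρ)/(1 − ρ)` with `ρ = c − 1`
is an increasing function of `ρ` with inverse `κ ↦ (κ − 1)/(κ + 1)`.
-/

section Operator

theorem opNorm_eq_sSup_ratio {𝕜 E F : Type*} [NontriviallyNormedField 𝕜]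
    [SeminormedAddCommGroup E] [NormedSpace 𝕜 E] [SeminormedAddCommGroup F] [NormedSpace 𝕜 F]
    (T : E →L[𝕜] F) : ‖T‖ = sSup {t : ℝ | ∃ x : E, x ≠ 0 ∧ t = ‖T x‖ / ‖x‖} := by
  have ratio_le : ∀ t ∈ {t : ℝ | ∃ x : E, x ≠ 0 ∧ t = ‖T x‖ / ‖x‖}, t ≤ ‖T‖ := by
    rintro _ ⟨x, -, rfl⟩
    exact T.ratio_le_opNorm x
  refine le_antisymm (T.opNorm_le_bound' (Real.sSup_nonneg ?_) fun x hx ↦ ?_)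
    (Real.sSup_le ratio_le (norm_nonneg T))
  · rintro _ ⟨x, -, rfl⟩
    positivity
  · have x_ne : x ≠ 0 := ne_zero_of_norm_ne_zero hx
    exact (div_le_iff₀ ((norm_nonneg x).lt_of_ne' hx)).1
      (le_csSup ⟨‖T‖, ratio_le⟩ ⟨x, x_ne, rfl⟩)

variable {𝕜 E : Type*} [RCLike 𝕜] [NormedAddCommGroup E] [InnerProductSpace 𝕜 E]

theorem rayleighQuotient_one_sub (T : E →L[𝕜] E) {x : E} (hx : x ≠ 0) :
    (1 - T).rayleighQuotient x = 1 - T.rayleighQuotient x := by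
  have one_apply : (1 : E →L[𝕜] E).rayleighQuotient x = 1 := by
    simp [ContinuousLinearMap.rayleighQuotient, ContinuousLinearMap.reApplyInnerSelf_apply, hx]
  rw [sub_eq_add_neg, ContinuousLinearMap.rayleighQuotient_add, one_apply,
    ContinuousLinearMap.rayleighQuotient_neg_apply, sub_eq_add_neg]

theorem norm_one_sub_eq_max_of_isGLB_of_isLUB_rayleighQuotient {T : E →L[𝕜] E}
    (hT : T.IsSymmetric) {a c : ℝ}
    (ha : IsGLB (T.rayleighQuotient '' {0}ᶜ) a) (hc : IsLUB (T.rayleighQuotient '' {0}ᶜ) c) :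
    ‖1 - T‖ = max (1 - a) (c - 1) := by
  have hsymm : (1 - T).IsSymmetric := LinearMap.IsSymmetric.one.sub hT
  apply le_antisymm
  · rw [ContinuousLinearMap.norm_eq_iSup_rayleighQuotient _ hsymm]
    refine ciSup_le fun x ↦ ?_
    rcases eq_or_ne x 0 with rfl | hx
    · have hac : a ≤ c := isGLB_le_isLUB ha hc ha.nonempty
      rw [ContinuousLinearMap.rayleighQuotient_apply_zero, abs_zero, le_max_iff]
      grind
    · have hax : a ≤ T.rayleighQuotient x := ha.1 ⟨x, hx, rfl⟩
      have hxc : T.rayleighQuotient x ≤ c := hc.1 ⟨x, hx, rfl⟩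
      rw [rayleighQuotient_one_sub T hx, abs_sub_comm, abs_eq_max_neg, max_comm, neg_sub]
      gcongr
  · have abs_le_norm {x : E} (hx : x ≠ 0) : |1 - T.rayleighQuotient x| ≤ ‖1 - T‖ :=
      rayleighQuotient_one_sub T hx ▸ (1 - T).rayleighQuotient_le_norm x
    have le_a : 1 - ‖1 - T‖ ≤ a := (le_isGLB_iff ha).2 <| by
      rintro _ ⟨x, hx, rfl⟩
      linarith [(abs_le.1 (abs_le_norm hx)).2]
    have c_le : c ≤ 1 + ‖1 - T‖ := (isLUB_le_iff hc).2 <| by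
      rintro _ ⟨x, hx, rfl⟩
      linarith [(abs_le.1 (abs_le_norm hx)).1]
    exact max_le (by linarith) (by linarith)

end Operator

section EnergySpace

open scoped ComplexOrder

variable {ι 𝕜 : Type*} [Fintype ι] [RCLike 𝕜] {B : Matrix ι ι 𝕜}

/-- The space `𝕜^ι` with the `B`-inner product `⟪x, y⟫ = xᴴBy` of a positive definite matrix `B`.
It is a type synonym indexed by the proof of positivity, so that the instances can depend on `B`
and do not clash with the supremum norm on `ι → 𝕜`. -/
def EnergySpace (_ : B.PosDef) : Type _ := ι → 𝕜

namespace EnergySpace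

variable (hB : B.PosDef)

noncomputable instance : NormedAddCommGroup (EnergySpace hB) := B.toNormedAddCommGroup hB

noncomputable instance : InnerProductSpace 𝕜 (EnergySpace hB) := B.toInnerProductSpace hB.posSemidef

variable {hB}

/-- The identity map from `EnergySpace hB` to `𝕜^ι`, as a linear equivalence. It is not an isometry
and only serves to pass between the two types. -/
def coords : EnergySpace hB ≃ₗ[𝕜] (ι → 𝕜) := LinearEquiv.refl 𝕜 (ι → 𝕜)

instance : FiniteDimensional 𝕜 (EnergySpace hB) := coords.symm.finiteDimensional

theorem inner_eq_dotProduct (x y : EnergySpace hB) :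
    inner 𝕜 x y = (B *ᵥ coords y) ⬝ᵥ star (coords x) := rfl

variable (hB) in
/-- The matrix `M` as a bounded operator for the `B`-inner product. -/
noncomputable def mulVecCLM (M : Matrix ι ι 𝕜) : EnergySpace hB →L[𝕜] EnergySpace hB :=
  LinearMap.toContinuousLinearMap (coords.symm.conj M.mulVecLin)

theorem coords_mulVecCLM (M : Matrix ι ι 𝕜) (x : EnergySpace hB) :
    coords (mulVecCLM hB M x) = M *ᵥ coords x := rfl

theorem inner_mulVecCLM (M : Matrix ι ι 𝕜) (x y : EnergySpace hB) :
    inner 𝕜 x (mulVecCLM hB M y) = ((B * M) *ᵥ coords y) ⬝ᵥ star (coords x) := by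
  rw [inner_eq_dotProduct, coords_mulVecCLM, mulVec_mulVec]

theorem isSymmetric_mulVecCLM {M : Matrix ι ι 𝕜} (hBM : (B * M).IsHermitian) :
    (mulVecCLM hB M).IsSymmetric := by
  intro x y
  calc inner 𝕜 (mulVecCLM hB M x) y
      = star (((B * M) *ᵥ coords x) ⬝ᵥ star (coords y)) := by
        rw [← inner_conj_symm, inner_mulVecCLM, starRingEnd_apply]
    _ = ((B * M) *ᵥ coords y) ⬝ᵥ star (coords x) := by
        rw [← dotProduct_star, star_mulVec, hBM.eq, dotProduct_comm, ← dotProduct_mulVec,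
          dotProduct_comm]
    _ = inner 𝕜 x (mulVecCLM hB M y) := (inner_mulVecCLM M x y).symm

theorem rayleighQuotient_mulVecCLM (M : Matrix ι ι 𝕜) (x : EnergySpace hB) :
    (mulVecCLM hB M).rayleighQuotient x =
      RCLike.re (((B * M) *ᵥ coords x) ⬝ᵥ star (coords x)) /
        RCLike.re ((B *ᵥ coords x) ⬝ᵥ star (coords x)) := by
  rw [ContinuousLinearMap.rayleighQuotient, ContinuousLinearMap.reApplyInnerSelf_apply,
    inner_re_symm, inner_mulVecCLM, norm_sq_eq_re_inner (𝕜 := 𝕜) x, inner_eq_dotProduct]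

theorem mulVecCLM_one_sub [DecidableEq ι] (M : Matrix ι ι 𝕜) :
    mulVecCLM hB (1 - M) = 1 - mulVecCLM hB M := by
  ext1 x
  apply coords.injective
  simp only [_root_.sub_apply, one_apply_eq_self, map_sub, coords_mulVecCLM, sub_mulVec, one_mulVec]

end EnergySpace

end EnergySpace

section RealMatrix

open EnergySpace

variable {n : ℕ} {A B : Matrix (Fin n) (Fin n) ℝ}

theorem norm_eq_bnorm_coords {hB : B.PosDef} (x : EnergySpace hB) : ‖x‖ = bnorm B (coords x) := by
  rw [norm_eq_sqrt_real_inner, inner_eq_dotProduct, star_trivial, bnorm]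

theorem bOpNorm_eq_norm_mulVecCLM (hB : B.PosDef) (M : Matrix (Fin n) (Fin n) ℝ) :
    bOpNorm B M = ‖mulVecCLM hB M‖ := by
  simp only [opNorm_eq_sSup_ratio, norm_eq_bnorm_coords, coords_mulVecCLM]
  -- Both suprema range over the same vectors because `coords` is definitionally the identity.
  rfl

theorem bOpNorm_one_sub_inv_mul_eq_max (hA : A.IsHermitian) (hB : B.PosDef) {a c : ℝ}
    (ha : IsGLB {t : ℝ | ∃ u : Fin n → ℝ, u ≠ 0 ∧ t = ((A *ᵥ u) ⬝ᵥ u) / ((B *ᵥ u) ⬝ᵥ u)} a)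
    (hc : IsLUB {t : ℝ | ∃ u : Fin n → ℝ, u ≠ 0 ∧ t = ((A *ᵥ u) ⬝ᵥ u) / ((B *ᵥ u) ⬝ᵥ u)} c) :
    bOpNorm B (1 - B⁻¹ * A) = max (1 - a) (c - 1) := by
  have mul_eq : B * (B⁻¹ * A) = A := mul_nonsing_inv_cancel_left _ _ hB.det_pos.ne'.isUnit
  have image_eq : (mulVecCLM hB (B⁻¹ * A)).rayleighQuotient '' {0}ᶜ =
      {t : ℝ | ∃ u : Fin n → ℝ, u ≠ 0 ∧ t = ((A *ᵥ u) ⬝ᵥ u) / ((B *ᵥ u) ⬝ᵥ u)} := by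
    ext t
    simp only [Set.mem_image, Set.mem_compl_singleton_iff, rayleighQuotient_mulVecCLM, mul_eq,
      star_trivial, RCLike.re_to_real, eq_comm (b := t)]
    rfl
  have hsymm : (mulVecCLM hB (B⁻¹ * A)).IsSymmetric :=
    isSymmetric_mulVecCLM (by rwa [mul_eq])
  rw [bOpNorm_eq_norm_mulVecCLM hB, mulVecCLM_one_sub]
  exact norm_one_sub_eq_max_of_isGLB_of_isLUB_rayleighQuotient hsymm
    (image_eq ▸ ha) (image_eq ▸ hc)

end RealMatrix

theorem generalizedRayleighQuotient_pos {ι : Type*} [Fintype ι] {A B : Matrix ι ι ℝ}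
    (hA : A.PosDef) (hB : B.PosDef) {u : ι → ℝ} (hu : u ≠ 0) :
    0 < ((A *ᵥ u) ⬝ᵥ u) / ((B *ᵥ u) ⬝ᵥ u) := by
  have quadForm_pos {C : Matrix ι ι ℝ} (hC : C.PosDef) : 0 < (C *ᵥ u) ⬝ᵥ u := by
    simpa only [star_trivial, dotProduct_comm] using hC.dotProduct_mulVec_pos hu
  exact div_pos (quadForm_pos hA) (quadForm_pos hB)

theorem div_le_iff_sub_one_le_of_add_eq_two {K : Type*} [Field K] [LinearOrder K]
    [IsStrictOrderedRing K] {a c κ : K} (ha : 0 < a) (hac : a + c = 2) (hκ : -1 < κ) :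
    c / a ≤ κ ↔ c - 1 ≤ (κ - 1) / (κ + 1) := by
  obtain rfl : a = 2 - c := by linarith
  rw [div_le_iff₀ ha, le_div_iff₀ (by linarith)]
  constructor <;> intro h <;> linarith

/-- Let `A`, `B` be SPD, and let `a` and `c` be the smallest and largest
values of the Rayleigh quotient `⟨A u, u⟩/⟨B u, u⟩` over nonzero `u` (the extreme
eigenvalues of `B⁻¹A`), normalized so that `a + c = 2`. Then for any `κmax ≥ 1`,
`c/a ≤ κmax ↔ ‖I − B⁻¹A‖_B ≤ (κmax − 1)/(κmax + 1)`. -/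
theorem cond_iff_bOpNorm {n : ℕ} (A B : Matrix (Fin n) (Fin n) ℝ)
    (hA : A.PosDef) (hB : B.PosDef) (a c : ℝ)
    (ha : IsLeast {t : ℝ | ∃ u : Fin n → ℝ, u ≠ 0 ∧
      t = ((A *ᵥ u) ⬝ᵥ u) / ((B *ᵥ u) ⬝ᵥ u)} a)
    (hc : IsGreatest {t : ℝ | ∃ u : Fin n → ℝ, u ≠ 0 ∧
      t = ((A *ᵥ u) ⬝ᵥ u) / ((B *ᵥ u) ⬝ᵥ u)} c)
    (hnorm : a + c = 2) (κmax : ℝ) (hκ : 1 ≤ κmax) :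
    c / a ≤ κmax ↔ bOpNorm B (1 - B⁻¹ * A) ≤ (κmax - 1) / (κmax + 1) := by
  have a_pos : 0 < a := by
    obtain ⟨u, hu, rfl⟩ := ha.1
    exact generalizedRayleighQuotient_pos hA hB hu
  have norm_eq : bOpNorm B (1 - B⁻¹ * A) = c - 1 := by
    rw [bOpNorm_one_sub_inv_mul_eq_max hA.isHermitian hB ha.isGLB hc.isLUB]
    exact max_eq_right (by linarith)
  rw [norm_eq]
  exact div_le_iff_sub_one_le_of_add_eq_two a_pos hnorm (by linarith)
end
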